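/- Let Ψ be a parse tree satisfying the deletion invariant, i.e., for every node v of Ψ that is not green, deficit(v) := 2^(height(Ψ_v)/10) − ‖Ψ_v‖ satisfies deficit(v) ≤ (height(Ψ_v)·‖Ψ_v‖ − B(Ψ_v)) / (20·height(Ψ_v)). Then every node of Ψ is green or yellow. -/

import Mathlib

/-! ### Parse trees

A parse tree is a finite binary tree in which every inner node has exactly
two children.  Nodes of a parse tree are identified either with the subtree
rooted at them, or with the path (list of booleans, `false` = left,
`true` = right) leading to them from the root. -/

inductive PTree : Type
  | leaf : PTree
  | node : PTree → PTree → PTree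

namespace PTree

/-- The height of a parse tree: the maximal number of nodes on a path from
the root to a leaf (a leaf has height 1). -/
def height : PTree → ℕ
  | leaf => 1
  | node l r => 1 + max l.height r.height

/-- The number of leaves `‖Ψ‖` of a parse tree. -/
def leaves : PTree → ℕ
  | leaf => 1
  | node l r => l.leaves + r.leaves

/-- `balance(v)`: height of the right subtree minus height of the left
subtree (0 for a leaf). -/
def bal : PTree → ℤ
  | leaf => 0
  | node l r => (r.height : ℤ) - (l.height : ℤ)

/-- The absolute balance `|balance(v)|`. -/
def abal (t : PTree) : ℤ := |t.bal|

/-- `B(Ψ)`: the sum of the absolute balances of all (inner) nodes. -/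
def totalBal : PTree → ℤ
  | leaf => 0
  | node l r => |(r.height : ℤ) - (l.height : ℤ)| + l.totalBal + r.totalBal

def isLeaf : PTree → Prop
  | leaf => True
  | node _ _ => False

/-- A node is *green* if `height(Ψ_v) ≤ 10·log₂‖Ψ_v‖` (leaves are green by
convention). -/
def Green (t : PTree) : Prop :=
  t.isLeaf ∨ (t.height : ℝ) ≤ 10 * Real.logb 2 (t.leaves : ℝ)

/-- A node is *yellow* if `height(Ψ_v) − 1 ≤ 10·log₂‖Ψ_v‖ < height(Ψ_v)`. -/
def Yellow (t : PTree) : Prop :=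
  ¬ t.isLeaf ∧ 10 * Real.logb 2 (t.leaves : ℝ) < (t.height : ℝ) ∧
    (t.height : ℝ) - 1 ≤ 10 * Real.logb 2 (t.leaves : ℝ)

/-- A node is *red* if it is neither green nor yellow. -/
def Red (t : PTree) : Prop := ¬ t.Green ∧ ¬ t.Yellow

/-- `IsSubtree t s`: `t` is the subtree of `s` rooted at some node of `s`. -/
inductive IsSubtree : PTree → PTree → Prop
  | refl (t : PTree) : IsSubtree t t
  | left {t l r : PTree} : IsSubtree t l → IsSubtree t (node l r)
  | right {t l r : PTree} : IsSubtree t r → IsSubtree t (node l r)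

/-- The subtree rooted at the node reached by following the path `p`
(`false` = left child, `true` = right child), if it exists. -/
def subtreeAt : PTree → List Bool → Option PTree
  | t, [] => some t
  | leaf, _ :: _ => none
  | node l _, false :: p => subtreeAt l p
  | node _ r, true :: p => subtreeAt r p

/-- Replace the subtree at path `p` by `s`. -/
def replaceAt : PTree → List Bool → PTree → PTree
  | _, [], s => s
  | leaf, _ :: _, _ => leaf
  | node l r, false :: p, s => node (replaceAt l p s) r
  | node l r, true :: p, s => node l (replaceAt r p s)

/-- `onLongPath t p`: the node of `t` reached by the path `p` lies on the
long path `lp(root of t)`.  The long path of `v` is `v` itself if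
`balance(v) = 0` (in particular if `v` is a leaf) and otherwise continues
into the strictly deeper subtree. -/
def onLongPath : PTree → List Bool → Prop
  | _, [] => True
  | leaf, _ :: _ => False
  | node l r, false :: p => r.height < l.height ∧ onLongPath l p
  | node l r, true :: p => l.height < r.height ∧ onLongPath r p

/-- The long path `lp(v)` of (the subtree rooted at) `v`, as the list of the
subtrees rooted at its nodes. -/
def lpList : PTree → List PTree
  | leaf => [leaf]
  | node l r =>
    if l.height = r.height then [node l r]
    else if l.height < r.height then node l r :: lpList r
    else node l r :: lpList l

/-- `IsComb t a b` : `t` is an inner node whose two subtrees are `a` and `b`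
(in either order). -/
def IsComb (t a b : PTree) : Prop := t = node a b ∨ t = node b a

end PTree

/-- `deficit(v) = 2^(height(Ψ_v)/10) − ‖Ψ_v‖`: the number of leaves that need
to be inserted into `Ψ_v` without increasing its height in order to make `v`
green. -/
noncomputable def PTree.deficit (t : PTree) : ℝ :=
  (2 : ℝ) ^ ((t.height : ℝ) / 10) - (t.leaves : ℝ)

/-! The invariant forces `deficit(v) ≤ ‖Ψ_v‖ / 20`, i.e. `2 ^ (height / 10) ≤ (21 / 20) * ‖Ψ_v‖`.
Decreasing the height by one divides the left-hand side by `2 ^ (1 / 10) ≥ 21 / 20`, so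
`2 ^ ((height - 1) / 10) ≤ ‖Ψ_v‖`, which says that `v` is not red. -/

theorem one_add_half_le_two_rpow {x : ℝ} (hx : 0 ≤ x) : 1 + x / 2 ≤ 2 ^ x := by
  have half_le_log_two : 1 / 2 ≤ Real.log 2 := by linarith [Real.log_two_gt_d9]
  calc 1 + x / 2 = x * (1 / 2) + 1 := by ring
    _ ≤ x * Real.log 2 + 1 := by gcongr
    _ ≤ Real.exp (x * Real.log 2) := Real.add_one_le_exp _
    _ = 2 ^ x := by rw [mul_comm, Real.rpow_def_of_pos two_pos]

namespace PTree

theorem height_pos (t : PTree) : 0 < t.height := by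
  cases t <;> simp only [height] <;> omega

theorem leaves_pos (t : PTree) : 0 < t.leaves := by
  induction t with
  | leaf => exact one_pos
  | node l r hl hr => exact add_pos hl hr

theorem totalBal_nonneg (t : PTree) : 0 ≤ t.totalBal := by
  induction t with
  | leaf => exact le_rfl
  | node l r hl hr => exact add_nonneg (add_nonneg (abs_nonneg _) hl) hr

theorem le_ten_mul_logb_leaves_iff (t : PTree) {x : ℝ} :
    x ≤ 10 * Real.logb 2 t.leaves ↔ (2 : ℝ) ^ (x / 10) ≤ t.leaves := by
  have hn : (0 : ℝ) < t.leaves := mod_cast t.leaves_pos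
  rw [← div_le_iff₀' (by norm_num), Real.le_logb_iff_rpow_le one_lt_two hn]

theorem green_or_yellow_iff_height_sub_one_le (t : PTree) :
    t.Green ∨ t.Yellow ↔ (t.height : ℝ) - 1 ≤ 10 * Real.logb 2 t.leaves := by
  constructor
  · rintro ((hleaf | hgreen) | ⟨-, -, hyellow⟩)
    · cases t with
      | leaf => simp [height, leaves]
      | node l r => exact hleaf.elim
    · linarith
    · exact hyellow
  · intro h
    by_cases hgreen : t.Green
    · exact .inl hgreen
    · obtain ⟨hinner, hlt⟩ := not_or.mp hgreen
      exact .inr ⟨hinner, not_le.mp hlt, h⟩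

theorem height_mul_leaves_sub_totalBal_div_le (t : PTree) :
    ((t.height : ℝ) * t.leaves - t.totalBal) / (20 * t.height) ≤ t.leaves / 20 := by
  have hh : (0 : ℝ) < t.height := mod_cast t.height_pos
  have hB : (0 : ℝ) ≤ t.totalBal := mod_cast t.totalBal_nonneg
  calc ((t.height : ℝ) * t.leaves - t.totalBal) / (20 * t.height)
      ≤ (t.height * t.leaves) / (20 * t.height) := by gcongr; exact sub_le_self _ hB
    _ = t.leaves / 20 := by field_simp

theorem two_rpow_le_leaves_of_deficit_le {t : PTree} (h : t.deficit ≤ t.leaves / 20) :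
    (2 : ℝ) ^ (((t.height : ℝ) - 1) / 10) ≤ t.leaves := by
  have two_rpow_tenth : (21 / 20 : ℝ) ≤ 2 ^ (1 / 10 : ℝ) := by
    convert one_add_half_le_two_rpow (x := 1 / 10) (by norm_num) using 1
    norm_num
  refine le_of_mul_le_mul_right ?_ (by norm_num : (0 : ℝ) < 21 / 20)
  calc (2 : ℝ) ^ (((t.height : ℝ) - 1) / 10) * (21 / 20)
      ≤ 2 ^ (((t.height : ℝ) - 1) / 10) * 2 ^ (1 / 10 : ℝ) := by gcongr
    _ = 2 ^ ((t.height : ℝ) / 10) := by rw [← Real.rpow_add two_pos]; ring_nf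
    _ = t.deficit + t.leaves := (sub_add_cancel _ _).symm
    _ ≤ t.leaves / 20 + t.leaves := by gcongr
    _ = t.leaves * (21 / 20) := by ring

theorem green_or_yellow_of_deficit_le {t : PTree} (h : t.deficit ≤ t.leaves / 20) :
    t.Green ∨ t.Yellow :=
  t.green_or_yellow_iff_height_sub_one_le.mpr <|
    t.le_ten_mul_logb_leaves_iff.mpr (two_rpow_le_leaves_of_deficit_le h)

end PTree

/-- Let `Ψ` be a parse tree satisfying the deletion
invariant: for every node `v` of `Ψ` that is not green,
`deficit(v) ≤ (height(Ψ_v)·‖Ψ_v‖ − B(Ψ_v)) / (20·height(Ψ_v))`.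
Then every node of `Ψ` is green or yellow. -/
theorem deletion_invariant_no_red_nodes
    (Ψ : PTree)
    (hdel : ∀ t, PTree.IsSubtree t Ψ → ¬ t.Green →
      t.deficit ≤ ((t.height : ℝ) * (t.leaves : ℝ) - (t.totalBal : ℝ)) /
        (20 * (t.height : ℝ))) :
    ∀ t, PTree.IsSubtree t Ψ → t.Green ∨ t.Yellow := by
  intro t ht
  by_cases hgreen : t.Green
  · exact .inl hgreen
  · exact PTree.green_or_yellow_of_deficit_le
      ((hdel t ht hgreen).trans t.height_mul_leaves_sub_totalBal_div_le)
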